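/- Estimation from samples, parts (b) and (c): let P be a computable probability on X×Y = Ω², h : ℕ → ℕ an increasing computable function, A := {(x,y) ∈ S² : |x| = h(|y|)}, and (x∞,y∞) ∈ Ω². (b) Let f : ℕ → ℚ ∩ (0,1) with Σ_n f(n) < ∞, and assume that for all (x,y) ⊏ (x∞,y∞) with |x| = h(|y|) one has |P(y|x)/P(y|x∞) − 1| < f(|y|), where P(y|x∞) := lim_{x→x∞, x⊏x∞} P(y|x). If inf_{(x,y)∈A(x∞,y∞)} P(y|x) > 0, then there is a computable monotone function ρ : S∪Ω → S∪Ω such that y ⊑ ρ(x) for all (x,y) ∈ A(x∞,y∞). (c) If (x∞,y∞) ∈ R^P and inf_{(x,y)∈A(x∞,y∞)} P(y|x) = 0, then there is no computable monotone function ρ : S∪Ω → S∪Ω with y ⊑ ρ(x) for all (x,y) ∈ A(x∞,y∞). -/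

import Mathlib

/-!
Existence of the function in (b). Along the prefixes `y` of `yinf` the masses `P(y|xinf)` decrease,
and `P(y|x)` differs from `P(y|xinf)` by a factor tending to `1`, so the lower bound on `P(y|x)`
forces `P(y|xinf)` to have a positive limit. Once a prefix `y` is so long that more than half of its
mass is never lost again, the correct next bit is strictly more probable than the wrong one, given
the first `h (|y| + 1)` bits of `xinf` (`eventually_next_bit`). A strict inequality between
computable reals is semidecidable, and the two bits cannot both be strictly more probable, so
predicting the more probable bit defines an r.e. set of pairs whose sections are chains, hence a
computable monotone function (`exists_compMono_of_rule`, `partB`). The finitely many bits before the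
inequality takes hold are hard-wired.

Non-existence in (c). If `ρ` is computable monotone, the pairs `(x, y)` with `|x| = h |y|`,
`y ⊑ ρ x` and `P(y|x) < 2^{-(m+1)}` form an r.e. set (`reSet_lowSet`). They are the graph of a
partial monotone map `x ↦ y`, so the pairs with `x` minimal cover the same set, have disjoint
`x`-cylinders, and cover mass at most `2^{-(m+1)}` (`measure_cover_le`). This is a Martin-Löf test;
if `ρ` recovered `yinf` from `xinf` and the infimum were `0`, then `(xinf, yinf)` would fail it
(`partC`). The prefixes of a random point have positive probability (`Random2.pos`), so the
convention for `P(y|x)` when `P_X(x) = 0` plays no role.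

A computable probability is presented by a computable function into `ℚ`, where computability refers
to the enumeration of `ℚ` by the `Denumerable` instance. To extract integer approximations
(`exists_nat_approx`) one needs numerators and denominators to be computable in that enumeration
(`computable_rawCode`), which holds because it lists the codes of reduced fractions in increasing
order.
-/

open MeasureTheory Filter Set
open scoped ENNReal NNReal

namespace AlgRand

/-- `S` : finite binary strings. -/
abbrev S : Type := List Bool

/-- `Seq` : infinite binary sequences (the space Ω). -/
abbrev Seq : Type := ℕ → Bool

/-- A finite string is a prefix of an infinite sequence. -/
def PrefixSeq (x : S) (ω : Seq) : Prop := ∀ i : Fin x.length, x.get i = ω i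

/-- The first `n` bits of an infinite sequence. -/
def seqTake (ω : Seq) (n : ℕ) : S := List.ofFn fun i : Fin n => ω i

/-- Cylinder set Δ(x) ⊆ Ω. -/
def cyl (x : S) : Set Seq := {ω | PrefixSeq x ω}

/-- Product cylinder Δ(x,y) ⊆ Ω². -/
def cyl2 (xy : S × S) : Set (Seq × Seq) := cyl xy.1 ×ˢ cyl xy.2

/-- Prefix (partial order) on S². -/
def Pre2 (a b : S × S) : Prop := a.1 <+: b.1 ∧ a.2 <+: b.2

/-- A pair of strings is a (strict) prefix of a pair of sequences. -/
def Pre2Seq (a : S × S) (ω : Seq × Seq) : Prop := PrefixSeq a.1 ω.1 ∧ PrefixSeq a.2 ω.2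

/-- Recursively enumerable subset of a primcodable type. -/
def RESet {β : Type} [Primcodable β] (A : Set β) : Prop :=
  ∃ f : ℕ → Option β, Computable f ∧ A = {a | ∃ n, f n = some a}

/-- A computable probability measure on Ω. -/
def ComputableProb (P : Measure Seq) : Prop :=
  IsProbabilityMeasure P ∧
    ∃ p : S × ℕ → ℚ, Computable p ∧
      ∀ (x : S) (k : ℕ), 0 < k → |(P (cyl x)).toReal - (p (x, k) : ℝ)| < 1 / k

/-- A computable probability measure on Ω². -/
def ComputableProb2 (P : Measure (Seq × Seq)) : Prop :=
  IsProbabilityMeasure P ∧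
    ∃ p : (S × S) × ℕ → ℚ, Computable p ∧
      ∀ (xy : S × S) (k : ℕ), 0 < k → |(P (cyl2 xy)).toReal - (p (xy, k) : ℝ)| < 1 / k

/-- Ũ_n, the open set covered by the n-th level of a test. -/
def testUnion {α β : Type} (C : β → Set α) (U : Set (ℕ × β)) (n : ℕ) : Set α :=
  ⋃ x ∈ {x | (n, x) ∈ U}, C x

/-- Martin-Löf test w.r.t. a measure, generic in the cylinder function `C`. -/
def IsMLTest {α β : Type} [MeasurableSpace α] [Primcodable β]
    (C : β → Set α) (P : Measure α) (U : Set (ℕ × β)) : Prop :=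
  RESet U ∧ (∀ n, testUnion C U (n + 1) ⊆ testUnion C U n) ∧
    ∀ n, P (testUnion C U n) < (2⁻¹ : ℝ≥0∞) ^ n

/-- Martin-Löf randomness: ω avoids the limit of every test. -/
def MLRandom {α β : Type} [MeasurableSpace α] [Primcodable β]
    (C : β → Set α) (P : Measure α) (ω : α) : Prop :=
  ∀ U, IsMLTest C P U → ω ∉ ⋂ n, testUnion C U n

/-- ω ∈ R^P, for P on Ω. -/
abbrev Random1 (P : Measure Seq) (ω : Seq) : Prop := MLRandom cyl P ω

/-- ω ∈ R^P, for P on Ω². -/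
abbrev Random2 (P : Measure (Seq × Seq)) (ω : Seq × Seq) : Prop := MLRandom cyl2 P ω

/-- Marginal distribution P_X on the first coordinate. -/
noncomputable def margX (P : Measure (Seq × Seq)) : Measure Seq := P.map Prod.fst

/-- Marginal distribution P_Y on the second coordinate. -/
noncomputable def margY (P : Measure (Seq × Seq)) : Measure Seq := P.map Prod.snd

/-- Conditional probability P(x|y) = P(x,y)/P_Y(y), with value 0 when P_Y(y) = 0. -/
noncomputable def condP (P : Measure (Seq × Seq)) (x y : S) : ℝ :=
  (P (cyl2 (x, y))).toReal / (P (Set.univ ×ˢ cyl y)).toReal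

/-- P(x|yinf) := lim_{y → yinf} P(x|y) along prefixes of yinf (junk value if no limit). -/
noncomputable def condPLim (P : Measure (Seq × Seq)) (x : S) (yinf : Seq) : ℝ :=
  limUnder atTop fun m => condP P x (seqTake yinf m)

/-- Conditional probability P(y|x) = P(x,y)/P_X(x), with value 0 when P_X(x) = 0. -/
noncomputable def condX (P : Measure (Seq × Seq)) (y x : S) : ℝ :=
  (P (cyl2 (x, y))).toReal / (P (cyl x ×ˢ Set.univ)).toReal

/-- P(y|xinf) := lim_{x → xinf} P(y|x) along prefixes of xinf (junk value if no limit). -/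
noncomputable def condXLim (P : Measure (Seq × Seq)) (y : S) (xinf : Seq) : ℝ :=
  limUnder atTop fun m => condX P y (seqTake xinf m)

/-- The set S ∪ Ω of finite or infinite binary sequences. -/
inductive SW : Type where
  | fin : S → SW
  | inf : Seq → SW

/-- Prefix order ⊑ on S ∪ Ω. -/
def SW.le : SW → SW → Prop
  | .fin x, .fin y => x <+: y
  | .fin x, .inf ω => PrefixSeq x ω
  | .inf ω, .inf ω' => ω = ω'
  | .inf _, .fin _ => False

/-- (S ∪ Ω)². -/
abbrev SW2 : Type := SW × SW

/-- Componentwise prefix order ⊑ on (S ∪ Ω)². -/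
def SW2.le (a b : SW2) : Prop := SW.le a.1 b.1 ∧ SW.le a.2 b.2

/-- Length |x| ∈ ℕ∞ of an element of S ∪ Ω. -/
def SW.len : SW → ℕ∞
  | .fin x => (x.length : ℕ∞)
  | .inf _ => ⊤

/-- |p| = |p₁| + |p₂| for p ∈ (S ∪ Ω)². -/
def SW2.len (a : SW2) : ℕ∞ := SW.len a.1 + SW.len a.2

/-- Δ(x) for x ∈ S ∪ Ω. -/
def SW.cylW : SW → Set Seq
  | .fin x => cyl x
  | .inf ω => {ω}

/-- Δ(x,y) for (x,y) ∈ (S ∪ Ω)². -/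
def SW2.cylW (a : SW2) : Set (Seq × Seq) := SW.cylW a.1 ×ˢ SW.cylW a.2

/-- Embedding S → S ∪ Ω. -/
def emb1 (x : S) : SW := SW.fin x

/-- Embedding S² → (S ∪ Ω)². -/
def emb2 (p : S × S) : SW2 := (SW.fin p.1, SW.fin p.2)

/-- Embedding Ω² → (S ∪ Ω)². -/
def inf2 (ω : Seq × Seq) : SW2 := (SW.inf ω.1, SW.inf ω.2)

/-- Least upper bound with respect to a relation. -/
def IsSupRel {V : Type} (le : V → V → Prop) (A : Set V) (s : V) : Prop :=
  (∀ a ∈ A, le a s) ∧ ∀ b, (∀ a ∈ A, le a b) → le s b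

/-- `f` is a computable monotone function defined by an r.e. set `F` satisfying
condition (3) of the paper:  (λ,λ) ∈ F_p and ⋁_{p'⊑p} F_{p'} exists for every p,
and f(q) = ⋁ {x : ∃ p' ⊑ q, (p',x) ∈ F}. -/
def CompMono {D E : Type} {W V : Type} [Primcodable D] [Primcodable E]
    (embD : D → W) (leW : W → W → Prop) (embE : E → V) (leV : V → V → Prop)
    (eps : E) (f : W → V) : Prop :=
  ∃ F : Set (D × E), RESet F ∧
    (∀ p : D, (p, eps) ∈ F ∧
        ∃ s, IsSupRel leV (embE '' {x | ∃ p' : D, leW (embD p') (embD p) ∧ (p', x) ∈ F}) s) ∧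
    ∀ q : W, IsSupRel leV (embE '' {x | ∃ p' : D, leW (embD p') q ∧ (p', x) ∈ F}) (f q)

/-- Computable monotone function (S ∪ Ω)² → (S ∪ Ω)². -/
def CompMono22 (f : SW2 → SW2) : Prop := CompMono emb2 SW2.le emb2 SW2.le (([], []) : S × S) f

/-- Computable monotone function S ∪ Ω → (S ∪ Ω)². -/
def CompMono12 (g : SW → SW2) : Prop := CompMono emb1 SW.le emb2 SW2.le (([], []) : S × S) g

/-- Computable monotone function (S ∪ Ω)² → S ∪ Ω. -/
def CompMono21 (e : SW2 → SW) : Prop := CompMono emb2 SW2.le emb1 SW.le ([] : S) e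

/-- Computable monotone function S ∪ Ω → S ∪ Ω. -/
def CompMono11 (ρ : SW → SW) : Prop := CompMono emb1 SW.le emb1 SW.le ([] : S) ρ

/-- Km²_f(x) := min{|p₁|+|p₂| : x ⊑ f(p₁,p₂)} ∈ ℕ∞. -/
noncomputable def Km2 (f : SW2 → SW2) (x : SW2) : ℕ∞ :=
  ⨅ (p : SW2) (_ : SW2.le x (f p)), SW2.len p

/-- Km_f(x) := min{|p| : x ⊑ f(p,λ)} ∈ ℕ∞. -/
noncomputable def Km1 (f : SW2 → SW2) (x : SW2) : ℕ∞ :=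
  ⨅ (p : SW) (_ : SW2.le x (f (p, SW.fin []))), SW.len p

/-- Km(x|y) := min{|p| : (x,λ) ⊑ u(p,y)} ∈ ℕ∞. -/
noncomputable def KmCond (u : SW2 → SW2) (x y : SW) : ℕ∞ :=
  ⨅ (p : SW) (_ : SW2.le (x, SW.fin []) (u (p, y))), SW.len p

/-- Km_g(x) := min{|p| : x ⊑ g(p)} for g : S ∪ Ω → (S ∪ Ω)². -/
noncomputable def KmOf12 (g : SW → SW2) (x : SW2) : ℕ∞ :=
  ⨅ (p : SW) (_ : SW2.le x (g p)), SW.len p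

/-- Optimality of a computable monotone function on (S ∪ Ω)². -/
def Optimal (u : SW2 → SW2) : Prop :=
  CompMono22 u ∧
    ∀ f : SW2 → SW2, CompMono22 f → ∃ c : ℕ, ∀ x : SW2, Km2 u x ≤ Km2 f x + (c : ℕ∞)

/-- 2^{-n} for n ∈ ℕ∞ (with 2^{-∞} = 0), as an extended nonnegative real. -/
noncomputable def tpow (n : ℕ∞) : ℝ≥0∞ := if n = ⊤ then 0 else (2⁻¹ : ℝ≥0∞) ^ n.toNat

/-- Non-overlapping subset of (S ∪ Ω)². -/
def NonOverlapW (A : Set SW2) : Prop := A.Pairwise fun a b => SW2.cylW a ∩ SW2.cylW b = ∅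

/-- Non-overlapping subset of S². -/
def NonOverlapF (A : Set (S × S)) : Prop := A.Pairwise fun a b => cyl2 a ∩ cyl2 b = ∅

/-- Condition (4): any two members of A are comparable or have disjoint cylinders. -/
def Cond4 (A : Set (S × S)) : Prop :=
  ∀ a ∈ A, ∀ b ∈ A, Pre2 a b ∨ Pre2 b a ∨ cyl2 a ∩ cyl2 b = ∅

/-- Condition (5): relative complements of cylinders are non-overlapping unions within A. -/
def Cond5 (A : Set (S × S)) : Prop :=
  ∀ a ∈ A, ∀ b ∈ A, ∃ α ⊆ A, NonOverlapF α ∧ cyl2 a ∩ (cyl2 b)ᶜ = ⋃ z ∈ α, cyl2 z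

/-- A(xinf) := {x ∈ A | x ⊏ xinf}. -/
def Asec (A : Set (S × S)) (ω : Seq × Seq) : Set (S × S) := {a ∈ A | Pre2Seq a ω}

/-- sup_{x ∈ A} (−log P(x) − K(x)) < ∞. -/
def KmBound (P : Measure (Seq × Seq)) (K : S × S → ℕ∞) (A : Set (S × S)) : Prop :=
  ∃ c : ℝ, ∀ x ∈ A, ∀ k : ℕ, K x = (k : ℕ∞) →
    0 < P (cyl2 x) ∧ -Real.logb 2 ((P (cyl2 x)).toReal) ≤ (k : ℝ) + c

/-- sup_{x ∈ A} |log P(x) + K(x)| < ∞. -/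
def KmBoundAbs (P : Measure (Seq × Seq)) (K : S × S → ℕ∞) (A : Set (S × S)) : Prop :=
  ∃ c : ℝ, ∀ x ∈ A, ∃ k : ℕ, K x = (k : ℕ∞) ∧ 0 < P (cyl2 x) ∧
    |Real.logb 2 ((P (cyl2 x)).toReal) + (k : ℝ)| ≤ c

/-- The conditional probability P(·|yinf) is computable relative to the oracle yinf:
there is a partial computable A(x,y,k), monotone in y, approximating P(x|yinf)
to within 1/k along prefixes y of yinf. -/
def CondComputableAt (P : Measure (Seq × Seq)) (yinf : Seq) : Prop :=
  ∃ A : (S × S) × ℕ →. ℚ, Partrec A ∧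
    (∀ (x y z : S) (k : ℕ) (q : ℚ), q ∈ A ((x, y), k) → y <+: z → q ∈ A ((x, z), k)) ∧
    ∀ (x : S) (k : ℕ), 0 < k → ∃ (m : ℕ) (q : ℚ), q ∈ A ((x, seqTake yinf m), k) ∧
      |condPLim P x yinf - (q : ℝ)| < 1 / k

/-- A Martin-Löf test w.r.t. Q which is r.e. relative to the oracle yinf. -/
def RelMLTest (Q : Measure Seq) (yinf : Seq) (U : ℕ → Set S) : Prop :=
  (∃ B : (ℕ × ℕ) × S →. S, Partrec B ∧
      (∀ (i n : ℕ) (y z x : S), x ∈ B ((i, n), y) → y <+: z → x ∈ B ((i, n), z)) ∧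
      ∀ n, U n = {x | ∃ i m, x ∈ B ((i, n), seqTake yinf m)}) ∧
  (∀ n, (⋃ x ∈ U (n + 1), cyl x) ⊆ ⋃ x ∈ U n, cyl x) ∧
  ∀ n, Q (⋃ x ∈ U n, cyl x) < (2⁻¹ : ℝ≥0∞) ^ n

/-- Martin-Löf randomness w.r.t. Q relative to the oracle yinf. -/
def RelMLRandom (Q : Measure Seq) (yinf xinf : Seq) : Prop :=
  ∀ U, RelMLTest Q yinf U → xinf ∉ ⋂ n, ⋃ x ∈ U n, cyl x

/-- Likelihood ratio r(x) = Q(x)/P(x), with value 0 when P(x) = 0. -/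
noncomputable def ratio (P Q : Measure Seq) (x : S) : ℝ :=
  (Q (cyl x)).toReal / (P (cyl x)).toReal

/-- P(·|yinf) f,(xinf,yinf)-effectively converges with rate g. -/
def EffConv (P : Measure (Seq × Seq)) (xinf yinf : Seq) (f : ℕ → ℚ) (g : ℕ → ℕ) : Prop :=
  Computable g ∧ Monotone g ∧
    ∀ x y : S, PrefixSeq x xinf → PrefixSeq y yinf → g x.length ≤ y.length →
      |condP P x y / condPLim P x yinf - 1| < (f x.length : ℝ)

/-- A_g(xinf,yinf) := {(x,y) : |y| = g(|x|), (x,y) ⊏ (xinf,yinf)}. -/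
def AgSec (g : ℕ → ℕ) (xinf yinf : Seq) : Set (S × S) :=
  {xy | xy.2.length = g xy.1.length ∧ PrefixSeq xy.1 xinf ∧ PrefixSeq xy.2 yinf}

/-- A uniformly computable family of probability measures on Ω. -/
def UnifComputableFam (Pn : ℕ → Measure Seq) : Prop :=
  (∀ n, IsProbabilityMeasure (Pn n)) ∧
    ∃ A : (ℕ × S) × ℕ → ℚ, Computable A ∧
      ∀ (n : ℕ) (x : S) (k : ℕ), 0 < k →
        |(A ((n, x), k) : ℝ) - ((Pn n) (cyl x)).toReal| < 1 / k

/-- A computable sequence of reals (e.g. a computable probability on ℕ). -/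
def ComputableRealSeq (α : ℕ → ℝ) : Prop :=
  ∃ a : ℕ × ℕ → ℚ, Computable a ∧ ∀ (n k : ℕ), 0 < k → |α n - (a (n, k) : ℝ)| < 1 / k

/-- The mixture Σ_n α(n) P_n. -/
noncomputable def mixture (α : ℕ → ℝ) (Pn : ℕ → Measure Seq) : Measure Seq :=
  Measure.sum fun n => ENNReal.ofReal (α n) • Pn n

/-- The conditional probability measure P(·|y) on Ω, for a finite string y. -/
noncomputable def condMeasGivenY (P : Measure (Seq × Seq)) (y : S) : Measure Seq :=
  (P (Set.univ ×ˢ cyl y))⁻¹ • ((P.restrict (Set.univ ×ˢ cyl y)).map Prod.fst)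

/-- The posterior distribution P_{Y|X}(·|x) on Ω, for a finite string x. -/
noncomputable def postMeas (P : Measure (Seq × Seq)) (x : S) : Measure Seq :=
  (P (cyl x ×ˢ Set.univ))⁻¹ • ((P.restrict (cyl x ×ˢ Set.univ)).map Prod.snd)

/-! ### Computability of the standard encoding of `ℚ` -/

/-- The code `⟨num, den⟩` of a rational given by the `Encodable` instance of `ℚ`; its range has gaps,
which the `Denumerable` instance (the one underlying `Computable`) closes up. -/
def rawCode (q : ℚ) : ℕ := Nat.pair (Equiv.intEquivNat q.num) q.den

/-- Decidable description of the set of raw codes: the denominator is positive and coprime to the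
absolute value of the numerator. The standard bijection `ℤ ≃ ℕ` sends `n` to `2 * n` and
`-(n + 1)` to `2 * n + 1`, so the absolute value of the integer with code `c` is `(c + 1) / 2`. -/
def IsRaw (n : ℕ) : Prop :=
  ¬ n.unpair.2 ≤ 0 ∧
    ∀ x < n.unpair.2 + 1, x ≤ 1 ∨ ¬ ((n.unpair.1 + 1) / 2 % x = 0 ∧ n.unpair.2 % x = 0)

instance : DecidablePred IsRaw := fun n => by unfold IsRaw; infer_instance

theorem intEquivNat_natAbs (z : ℤ) : (Equiv.intEquivNat z + 1) / 2 = z.natAbs := by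
  rcases z with n | n
  · change (2 * n + 1) / 2 = n
    omega
  · change (2 * n + 1 + 1) / 2 = n + 1
    omega

theorem intEquivNat_toNat (z : ℤ) :
    (bif decide (Equiv.intEquivNat z % 2 = 0) then Equiv.intEquivNat z / 2 else 0) = z.toNat := by
  rcases z with n | n
  · change (bif decide ((2 * n) % 2 = 0) then (2 * n) / 2 else 0) = n
    simp
  · change (bif decide ((2 * n + 1) % 2 = 0) then (2 * n + 1) / 2 else 0) = 0
    simp [Nat.add_mod]

theorem coprime_iff_forall (a d : ℕ) (hd : 0 < d) :
    (∀ x < d + 1, x ≤ 1 ∨ ¬ (a % x = 0 ∧ d % x = 0)) ↔ a.Coprime d := by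
  constructor
  · intro h
    have h1 := h (a.gcd d) (Nat.lt_succ_of_le (Nat.le_of_dvd hd (Nat.gcd_dvd_right a d)))
    have h2 : a % a.gcd d = 0 := Nat.mod_eq_zero_of_dvd (Nat.gcd_dvd_left a d)
    have h3 : d % a.gcd d = 0 := Nat.mod_eq_zero_of_dvd (Nat.gcd_dvd_right a d)
    have h4 : 0 < a.gcd d := Nat.gcd_pos_of_pos_right a hd
    have : a.gcd d ≤ 1 := by tauto
    exact le_antisymm this h4
  · intro h x _
    by_contra! hx
    have := Nat.eq_one_of_dvd_coprimes h (Nat.dvd_of_mod_eq_zero hx.2.1)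
      (Nat.dvd_of_mod_eq_zero hx.2.2)
    omega

theorem isRaw_iff (n : ℕ) : IsRaw n ↔ ∃ q : ℚ, rawCode q = n := by
  constructor
  · rintro ⟨h0, h1⟩
    have h0 : 0 < n.unpair.2 := by omega
    rw [coprime_iff_forall _ _ h0] at h1
    refine ⟨⟨Equiv.intEquivNat.symm n.unpair.1, n.unpair.2, h0.ne', ?_⟩, ?_⟩
    · rwa [← intEquivNat_natAbs, Equiv.apply_symm_apply]
    · simp [rawCode]
  · rintro ⟨q, rfl⟩
    have h0 : 0 < q.den := q.den_pos
    refine ⟨by simp [rawCode], ?_⟩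
    simp only [rawCode, Nat.unpair_pair]
    rw [coprime_iff_forall _ _ h0, intEquivNat_natAbs]
    exact q.reduced

theorem computable_isRaw : Computable fun n => decide (IsRaw n) := by
  have hR : PrimrecRel fun (x : ℕ) (n : ℕ) =>
      x ≤ 1 ∨ ¬ ((n.unpair.1 + 1) / 2 % x = 0 ∧ n.unpair.2 % x = 0) := by
    have hx : Primrec fun p : ℕ × ℕ => p.1 := Primrec.fst
    have hu : Primrec fun p : ℕ × ℕ => p.2.unpair := Primrec.unpair.comp Primrec.snd
    have hA : Primrec fun p : ℕ × ℕ => (p.2.unpair.1 + 1) / 2 % p.1 :=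
      Primrec.nat_mod.comp (Primrec.nat_div.comp (Primrec.succ.comp (Primrec.fst.comp hu))
        (Primrec.const 2)) hx
    have hD : Primrec fun p : ℕ × ℕ => p.2.unpair.2 % p.1 :=
      Primrec.nat_mod.comp (Primrec.snd.comp hu) hx
    have h1 : PrimrecPred fun p : ℕ × ℕ => p.1 ≤ 1 := Primrec.nat_le.comp hx (Primrec.const 1)
    have h2 : PrimrecPred fun p : ℕ × ℕ => (p.2.unpair.1 + 1) / 2 % p.1 = 0 :=
      Primrec.eq.comp hA (Primrec.const 0)
    have h3 : PrimrecPred fun p : ℕ × ℕ => p.2.unpair.2 % p.1 = 0 :=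
      Primrec.eq.comp hD (Primrec.const 0)
    exact (h1.or (h2.and h3).not).primrecRel
  have hden : Primrec fun n : ℕ => n.unpair.2 := Primrec.snd.comp Primrec.unpair
  have h1 : PrimrecPred fun n : ℕ => ¬ n.unpair.2 ≤ 0 :=
    (Primrec.nat_le.comp hden (Primrec.const 0)).not
  have h2 := hR.forall_lt.comp (Primrec.succ.comp hden) Primrec.id
  have h3 : PrimrecPred IsRaw := h1.and h2
  exact (primrecPred_iff_primrec_decide.1 h3).to_comp

/-- The step from one raw code to the next one is computable. -/
theorem computable_next (g : ℕ → ℕ) (hg : ∀ n, ∃ m, IsRaw (n + m + 1))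
    (hn : ∀ n, g n = n + Nat.find (hg n) + 1) : Computable g := by
  have hp : Computable₂ fun n m : ℕ => decide (IsRaw (n + m + 1)) :=
    computable_isRaw.comp (Primrec.succ.comp
      (Primrec.nat_add.comp Primrec.fst Primrec.snd)).to_comp
  have hf : Computable fun n => Nat.find (hg n) := by
    refine Partrec.of_eq_tot (Partrec.rfind hp.partrec₂) fun n => ?_
    rw [Nat.mem_rfind]
    refine ⟨?_, fun {m} hm => ?_⟩
    · simpa using! Nat.find_spec (hg n)
    · simpa using! Nat.find_min (hg n) hm
  refine (Computable.succ.comp (Primrec.nat_add.to_comp.comp Computable.id hf)).of_eq fun n => ?_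
  simp [hn]

/-- The raw code of a rational is computable from its code in the enumeration of `ℚ`: the
enumeration lists the raw codes in increasing order. -/
theorem computable_rawCode : Computable rawCode := by
  let _ := @Encodable.decidableRangeEncode ℚ Rat.instEncodable
  let hinf : Infinite (Set.range (@Encodable.encode ℚ Rat.instEncodable)) :=
    Infinite.of_injective _ (Equiv.ofInjective _ Encodable.encode_injective).injective
  have hmem : ∀ n, n ∈ Set.range (@Encodable.encode ℚ Rat.instEncodable) ↔ IsRaw n :=
    fun n => (isRaw_iff n).symm
  have key : ∀ n, rawCode (Denumerable.ofNat ℚ n) =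
      (Nat.Subtype.ofNat (Set.range (@Encodable.encode ℚ Rat.instEncodable)) n : ℕ) := by
    intro n
    exact congrArg Subtype.val ((Encodable.equivRangeEncode ℚ).apply_symm_apply _)
  have hg : ∀ n, ∃ m, IsRaw (n + m + 1) := by
    intro n
    obtain ⟨b, hb, hnb⟩ := (Set.infinite_coe_iff.1 hinf).exists_gt n
    refine ⟨b - n - 1, ?_⟩
    rw [show n + (b - n - 1) + 1 = b by omega]
    exact (hmem b).1 hb
  have hstep := computable_next _ hg fun n => rfl
  have hrec : Computable fun n : ℕ => (Nat.rec (rawCode (Denumerable.ofNat ℚ 0))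
      (fun _ r => r + Nat.find (hg r) + 1) n : ℕ) :=
    Computable.nat_rec Computable.id (Computable.const _)
      (hstep.comp (Computable.snd.comp Computable.snd)).to₂
  have hof : Computable fun n => rawCode (Denumerable.ofNat ℚ n) := by
    refine hrec.of_eq fun n => ?_
    induction n with
    | zero => rfl
    | succ n ih =>
      have h1 : (Nat.rec (rawCode (Denumerable.ofNat ℚ 0))
        (fun _ r => r + Nat.find (hg r) + 1) n : ℕ) = _ := ih
      change (fun r => r + Nat.find (hg r) + 1) (Nat.rec (rawCode (Denumerable.ofNat ℚ 0))
        (fun _ r => r + Nat.find (hg r) + 1) n : ℕ) = _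
      rw [h1, key (n + 1), key n]
      change _ = _ + Nat.find _ + 1
      simp only
      congr 2
      apply Nat.find_congr'
      intro m
      exact (hmem _).symm
  refine (hof.comp Computable.encode).of_eq fun q => ?_
  rw [Denumerable.ofNat_encode]

theorem computable_den : Computable fun q : ℚ => q.den :=
  (Computable.snd.comp (Computable.unpair.comp computable_rawCode)).of_eq fun q => by
    simp [rawCode]

theorem computable_num_toNat : Computable fun q : ℚ => q.num.toNat := by
  have h : Computable fun q : ℚ => (rawCode q).unpair.1 :=
    Computable.fst.comp (Computable.unpair.comp computable_rawCode)
  have hd : Computable fun n : ℕ => decide (n % 2 = 0) :=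
    (primrecPred_iff_primrec_decide.1 (Primrec.eq.comp
      (Primrec.nat_mod.comp Primrec.id (Primrec.const 2)) (Primrec.const 0))).to_comp
  have h2 : Computable fun n : ℕ => n / 2 :=
    (Primrec.nat_div.comp Primrec.id (Primrec.const 2)).to_comp
  refine (Computable.cond (hd.comp h) (h2.comp h) (Computable.const 0)).of_eq fun q => ?_
  simp only [rawCode, Nat.unpair_pair]
  exact intEquivNat_toNat q.num

/-- A computable probability has computable integer approximations `a (xy, k)` of `k * P (xy)`,
with an error of at most `2`. -/
theorem exists_nat_approx {P : Measure (Seq × Seq)} (hP : ComputableProb2 P) :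
    ∃ a : (S × S) × ℕ → ℕ, Computable a ∧ ∀ xy k,
      (a (xy, k) : ℝ) ≤ k * (P (cyl2 xy)).toReal + 2 ∧
        k * (P (cyl2 xy)).toReal ≤ a (xy, k) + 2 := by
  obtain ⟨_, p, hp, hpP⟩ := hP
  refine ⟨fun z => z.2 * (p z).num.toNat / (p z).den, ?_, ?_⟩
  · exact Primrec.nat_div.to_comp.comp
      (Primrec.nat_mul.to_comp.comp Computable.snd (computable_num_toNat.comp hp))
      (computable_den.comp hp)
  · intro xy k
    rcases Nat.eq_zero_or_pos k with rfl | hk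
    · simp
    have h := hpP xy k hk
    beta_reduce
    have h0 : 0 ≤ (P (cyl2 xy)).toReal := ENNReal.toReal_nonneg
    generalize (P (cyl2 xy)).toReal = r at h h0 ⊢
    generalize p (xy, k) = q at h ⊢
    have hk' : (0 : ℝ) < k := by exact_mod_cast hk
    have hd : (0 : ℝ) < q.den := by exact_mod_cast q.den_pos
    have hq : (q : ℝ) = q.num / q.den := Rat.cast_def q
    rw [abs_lt] at h
    have e1 : (k : ℝ) * (1 / k) = 1 := by field_simp
    have h1 := mul_lt_mul_of_pos_left h.1 hk'
    have h2 := mul_lt_mul_of_pos_left h.2 hk'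
    have hfl : ((k * q.num.toNat / q.den : ℕ) : ℝ) ≤ k * (q.num.toNat / q.den) := by
      refine (Nat.cast_div_le).trans (le_of_eq ?_)
      push_cast
      ring
    have hfl' : (k : ℝ) * (q.num.toNat / q.den) ≤ (k * q.num.toNat / q.den : ℕ) + 1 := by
      have := Nat.lt_div_mul_add (a := k * q.num.toNat) q.den_pos
      have h3 : ((k * q.num.toNat : ℕ) : ℝ) ≤
          ((k * q.num.toNat / q.den * q.den + q.den : ℕ) : ℝ) := by exact_mod_cast this.le
      push_cast at h3
      rw [← mul_div_assoc, div_le_iff₀ hd]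
      linarith
    rcases le_or_gt 0 q.num with hn | hn
    · have hc : (q.num.toNat : ℝ) = q.num := by exact_mod_cast Int.toNat_of_nonneg hn
      rw [hc, ← hq] at hfl hfl'
      constructor <;> nlinarith
    · have hc : q.num.toNat = 0 := by omega
      have hq' : (q : ℝ) ≤ 0 := by
        rw [hq]
        exact div_nonpos_of_nonpos_of_nonneg (by exact_mod_cast hn.le) hd.le
      have := mul_nonneg hk'.le h0
      have := mul_nonneg hk'.le (neg_nonneg.2 hq')
      simp only [hc, mul_zero, Nat.zero_div, Nat.cast_zero]
      constructor <;> nlinarith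

/-! ### Recursively enumerable sets -/

/-- Projections of computable relations are recursively enumerable. -/
theorem reSet_of_exists {β γ : Type} [Primcodable β] [Primcodable γ] (T : β × γ → Bool)
    (hT : Computable T) : RESet {b | ∃ c, T (b, c) = true} := by
  refine ⟨fun n => (Encodable.decode (α := β × γ) n).bind
    fun z => bif T z then some z.1 else none, ?_, ?_⟩
  · exact Computable.option_bind Computable.decode
      (Computable.cond (hT.comp Computable.snd)
        (Computable.option_some.comp (Computable.fst.comp Computable.snd))
        (Computable.const none)).to₂
  · ext b
    constructor
    · rintro ⟨c, hc⟩
      exact ⟨Encodable.encode (b, c), by simp [hc]⟩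
    · rintro ⟨n, hn⟩
      rw [Option.bind_eq_some_iff] at hn
      obtain ⟨⟨b', c⟩, -, h⟩ := hn
      cases hT' : T (b', c) <;> simp [hT'] at h
      exact ⟨c, h ▸ hT'⟩

/-- Computable relations are closed under bounded universal quantification. -/
theorem exists_bounded_forall {α : Type} [Primcodable α] (t : α × ℕ → Bool) (ht : Computable t)
    (n : α → ℕ) (hn : Computable n) :
    ∃ T : α → Bool, Computable T ∧ ∀ a, T a = true ↔ ∀ i < n a, t (a, i) = true := by
  refine ⟨fun a => Nat.rec true (fun i b => b && t (a, i)) (n a), ?_, fun a => ?_⟩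
  · exact Computable.nat_rec hn (Computable.const true)
      (Primrec.and.to_comp.comp (Computable.snd.comp Computable.snd)
        (ht.comp (Computable.pair Computable.fst
          (Computable.fst.comp Computable.snd)))).to₂
  · beta_reduce
    generalize n a = m
    induction m with
    | zero => simp
    | succ m ih =>
      simp only [Bool.and_eq_true]
      rw [ih]
      constructor
      · rintro ⟨h1, h2⟩ i hi
        rcases Nat.lt_succ_iff_lt_or_eq.1 hi with h | rfl
        exacts [h1 i h, h2]
      · exact fun h => ⟨fun i hi => h i (by omega), h m (by omega)⟩

theorem computable_decide_isPrefix_of {α : Type} [Primcodable α] {u v : α → S} (hu : Computable u)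
    (hv : Computable v) : Computable fun a => decide (u a <+: v a) := by
  have h : Computable fun a => decide (u a = (v a).take (u a).length) :=
    (Primrec.eq (α := S)).decide.to_comp.comp hu
      (Primrec.list_take.to_comp.comp (Computable.list_length.comp hu) hv)
  refine h.of_eq fun a => ?_
  rw [Bool.eq_iff_iff, decide_eq_true_iff, decide_eq_true_iff, List.prefix_iff_eq_take]

/-! ### Finite prefixes, cylinders and suprema of chains of strings -/

theorem prefixSeq_iff {x : S} {ω : Seq} : PrefixSeq x ω ↔ ∀ i (hi : i < x.length), x[i] = ω i :=
  ⟨fun h i hi => h ⟨i, hi⟩, fun h i => h i i.2⟩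

@[simp] theorem length_seqTake (ω : Seq) (n : ℕ) : (seqTake ω n).length = n := by simp [seqTake]

theorem prefixSeq_seqTake (ω : Seq) (n : ℕ) : PrefixSeq (seqTake ω n) ω :=
  prefixSeq_iff.2 fun i hi => by simp [seqTake]

theorem prefixSeq_eq {x : S} {ω : Seq} (h : PrefixSeq x ω) : x = seqTake ω x.length := by
  rw [prefixSeq_iff] at h
  exact List.ext_getElem (by simp) fun i h1 h2 => by simp [h i h1, seqTake]

theorem PrefixSeq.anti {x y : S} {ω : Seq} (hy : PrefixSeq y ω) (h : x <+: y) :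
    PrefixSeq x ω := by
  rw [prefixSeq_iff] at hy ⊢
  intro i hi
  rw [h.getElem hi]
  exact hy i _

theorem PrefixSeq.prefix_of_le {x y : S} {ω : Seq} (hx : PrefixSeq x ω) (hy : PrefixSeq y ω)
    (h : x.length ≤ y.length) : x <+: y := by
  rw [prefixSeq_iff] at hx hy
  rw [List.prefix_iff_eq_take]
  exact List.ext_getElem (by simp [h]) fun i h1 h2 => by
    simp [hx i h1, hy i (by omega)]

theorem seqTake_succ (ω : Seq) (n : ℕ) : seqTake ω (n + 1) = seqTake ω n ++ [ω n] := by
  rw [seqTake, List.ofFn_succ_last]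
  simp [seqTake]

theorem take_seqTake (ω : Seq) {m n : ℕ} (h : m ≤ n) : (seqTake ω n).take m = seqTake ω m := by
  refine List.ext_getElem (by simp [h]) fun i h1 h2 => by simp [seqTake]

theorem comparable_of_le {a b : S} {s : SW} (ha : SW.le (.fin a) s) (hb : SW.le (.fin b) s) :
    a <+: b ∨ b <+: a := by
  cases s with
  | fin s => exact List.prefix_or_prefix_of_prefix ha hb
  | inf ω =>
    rcases le_total a.length b.length with h | h
    · exact Or.inl (PrefixSeq.prefix_of_le ha hb h)
    · exact Or.inr (PrefixSeq.prefix_of_le hb ha h)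

/-- Every nonempty chain of finite strings has a supremum in `S ∪ Ω`. -/
theorem exists_isSup (A : Set S) (hne : A.Nonempty)
    (hA : ∀ a ∈ A, ∀ b ∈ A, a <+: b ∨ b <+: a) : ∃ s, IsSupRel SW.le (emb1 '' A) s := by
  by_cases hb : ∃ N, ∀ a ∈ A, a.length ≤ N
  · -- a longest element of `A` is its maximum
    obtain ⟨N, hN⟩ := hb
    have hfin : (List.length '' A).Finite :=
      (Set.finite_Iic N).subset (by rintro _ ⟨a, ha, rfl⟩; exact hN a ha)
    obtain ⟨m, hm⟩ := hfin.exists_maximal (hne.image _)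
    obtain ⟨a, ha, rfl⟩ := hm.1
    refine ⟨.fin a, ?_, fun b hb => hb _ ⟨a, ha, rfl⟩⟩
    rintro _ ⟨c, hc, rfl⟩
    rcases hA c hc a ha with h | h
    · exact h
    · have h1 := hm.2 ⟨c, hc, rfl⟩ h.length_le
      rw [h.eq_of_length_le h1]
      exact List.prefix_refl _
  · push Not at hb
    choose e heA he using hb
    -- the limit sequence reads its `i`-th bit off any element of length greater than `i`
    let ω : Seq := fun i => (e i)[i]'(he i)
    have key : ∀ a ∈ A, PrefixSeq a ω := by
      intro a ha
      rw [prefixSeq_iff]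
      intro i hi
      rcases hA a ha (e i) (heA i) with h | h
      · exact h.getElem hi
      · exact (h.getElem (he i)).symm
    refine ⟨.inf ω, ?_, fun b hb => ?_⟩
    · rintro _ ⟨a, ha, rfl⟩
      exact key a ha
    · cases b with
      | fin b =>
        have h : e b.length <+: b := hb _ ⟨_, heA _, rfl⟩
        exact absurd (he b.length) (not_lt.2 h.length_le)
      | inf ω' =>
        change ω = ω'
        funext i
        have h : PrefixSeq (e i) ω' := hb _ ⟨_, heA _, rfl⟩
        exact prefixSeq_iff.1 h i (he i)

/-- A finite string below the supremum of a chain is below a member of the chain. -/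
theorem exists_prefix_of_le_isSup (A : Set S) (hne : A.Nonempty) {s : SW}
    (hs : IsSupRel SW.le (emb1 '' A) s) {y : S} (hy : SW.le (.fin y) s) : ∃ z ∈ A, y <+: z := by
  by_contra! hcon
  have hlt : ∀ z ∈ A, z <+: y ∧ z.length < y.length := by
    intro z hz
    rcases comparable_of_le hy (hs.1 _ ⟨z, hz, rfl⟩) with h | h
    · exact absurd h (hcon z hz)
    · refine ⟨h, lt_of_not_ge fun h' => hcon z hz ?_⟩
      rw [h.eq_of_length_le h']
  -- otherwise `y` without its last bit would be a smaller upper bound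
  have hub := hs.2 (.fin y.dropLast) (by
    rintro _ ⟨z, hz, rfl⟩
    obtain ⟨h1, h2⟩ := hlt z hz
    exact List.prefix_of_prefix_length_le h1 (List.dropLast_prefix y)
      (by rw [List.length_dropLast]; omega))
  obtain ⟨z, hz⟩ := hne
  have h0 := (hlt z hz).2
  have hle : y.length ≤ y.dropLast.length := by
    cases s with
    | fin s => exact (List.IsPrefix.trans hy hub).length_le
    | inf ω => exact hub.elim
  rw [List.length_dropLast] at hle
  omega

theorem cyl_nil : cyl [] = Set.univ := by
  ext ω
  simp [cyl, prefixSeq_iff]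

theorem cyl_anti {x y : S} (h : x <+: y) : cyl y ⊆ cyl x := fun _ hω => PrefixSeq.anti hω h

theorem cyl2_anti {a b : S × S} (h : Pre2 a b) : cyl2 b ⊆ cyl2 a :=
  Set.prod_mono (cyl_anti h.1) (cyl_anti h.2)

theorem cyl_comparable {x y : S} (h : ¬ Disjoint (cyl x) (cyl y)) : x <+: y ∨ y <+: x := by
  obtain ⟨ω, hx, hy⟩ := Set.not_disjoint_iff.1 h
  exact comparable_of_le (s := .inf ω) hx hy

theorem measurableSet_cyl (x : S) : MeasurableSet (cyl x) := by
  have : cyl x = ⋂ i : Fin x.length, {ω | x.get i = ω i} := by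
    ext ω
    simp [cyl, PrefixSeq]
  rw [this]
  exact MeasurableSet.iInter fun i =>
    measurableSet_eq_fun measurable_const (measurable_pi_apply _)

theorem measurableSet_cyl2 (a : S × S) : MeasurableSet (cyl2 a) :=
  (measurableSet_cyl _).prod (measurableSet_cyl _)

theorem cyl2_nil (x : S) : cyl2 (x, []) = cyl x ×ˢ Set.univ := by simp [cyl2, cyl_nil]

/-- Two incompatible extensions of `v` share the mass of `v`. -/
theorem add_le_of_siblings (P : Measure (Seq × Seq)) [IsProbabilityMeasure P] (x v u u' : S)
    (hu : v <+: u) (hu' : v <+: u') (hne : u ≠ u') (hlen : u.length = u'.length) :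
    (P (cyl2 (x, u))).toReal + (P (cyl2 (x, u'))).toReal ≤ (P (cyl2 (x, v))).toReal := by
  have hd : Disjoint (cyl2 (x, u)) (cyl2 (x, u')) := by
    refine Set.disjoint_prod.2 (Or.inr ?_)
    by_contra h
    rcases cyl_comparable h with h | h
    · exact hne (h.eq_of_length hlen)
    · exact hne (h.eq_of_length hlen.symm).symm
  rw [← ENNReal.toReal_add (measure_ne_top _ _) (measure_ne_top _ _),
    ← measure_union hd (measurableSet_cyl2 _)]
  exact ENNReal.toReal_mono (measure_ne_top _ _) (measure_mono (Set.union_subset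
    (cyl2_anti ⟨List.prefix_refl _, hu⟩) (cyl2_anti ⟨List.prefix_refl _, hu'⟩)))

/-! ### Bitwise prediction -/

/-- A semidecidable rule `R x v b` ("having seen `x`, bit `b` comes after `v`"), monotone in `x` and
never predicting both bits, is implemented by a computable monotone function. -/
theorem exists_compMono_of_rule (R : S → S → Bool → Prop) (t : (S × S × Bool) × ℕ → Bool)
    (ht : Computable t) (hsound : ∀ x v b k, t ((x, v, b), k) = true → R x v b)
    (hcomplete : ∀ x v b, R x v b → ∀ᶠ k in atTop, t ((x, v, b), k) = true)
    (hmono : ∀ x x' v b, x <+: x' → R x v b → R x' v b)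
    (hdet : ∀ x v b b', R x v b → R x v b' → b = b') :
    ∃ ρ : SW → SW, CompMono11 ρ ∧
      ∀ x y : S, (∀ i < y.length, R x (y.take i) (y.getD i false)) →
        SW.le (.fin y) (ρ (.fin x)) := by
  have htc : Computable fun z : ((S × S) × ℕ) × ℕ =>
      t ((z.1.1.1, z.1.1.2.take z.2, z.1.1.2.getD z.2 false), z.1.2) := by
    have h1 : Computable fun z : ((S × S) × ℕ) × ℕ => z.1.1 :=
      Computable.fst.comp Computable.fst
    have h2 : Computable fun z : ((S × S) × ℕ) × ℕ => z.1.1.2 := Computable.snd.comp h1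
    exact ht.comp (Computable.pair (Computable.pair (Computable.fst.comp h1)
      (Computable.pair (Primrec.list_take.to_comp.comp Computable.snd h2)
        ((Primrec.list_getD false).to_comp.comp h2 Computable.snd)))
      (Computable.snd.comp Computable.fst))
  obtain ⟨T, hT, hTiff⟩ := exists_bounded_forall _ htc (fun z => z.1.2.length)
    (Computable.list_length.comp (Computable.snd.comp Computable.fst))
  have hF := reSet_of_exists T hT
  set F : Set (S × S) := {w | ∃ k, T (w, k) = true} with hFdef
  have hFiff : ∀ x y, (x, y) ∈ F ↔ ∀ i < y.length, R x (y.take i) (y.getD i false) := by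
    intro x y
    constructor
    · rintro ⟨k, hk⟩ i hi
      exact hsound _ _ _ _ ((hTiff _).1 hk i hi)
    · intro hR
      -- one precision `k` has to serve all positions at once
      have : ∀ᶠ k in atTop, ∀ i ∈ Set.Iio y.length,
          t ((x, y.take i, y.getD i false), k) = true :=
        (Filter.eventually_all_finite (Set.finite_Iio _)).2
          fun i hi => hcomplete _ _ _ (hR i hi)
      obtain ⟨k, hk⟩ := this.exists
      exact ⟨k, (hTiff _).2 hk⟩
  have hnil : ∀ x, (x, []) ∈ F := fun x => (hFiff x []).2 (by simp)
  have hFmono : ∀ x x' y, x <+: x' → (x, y) ∈ F → (x', y) ∈ F := by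
    intro x x' y hx hy
    rw [hFiff] at hy ⊢
    exact fun i hi => hmono _ _ _ _ hx (hy i hi)
  have hwlog : ∀ x y y', (x, y) ∈ F → (x, y') ∈ F → y.length ≤ y'.length → y <+: y' := by
    intro x y y' hy hy' hlen
    rw [hFiff] at hy hy'
    have key : ∀ i ≤ y.length, y.take i = y'.take i := by
      intro i
      induction i with
      | zero => simp
      | succ i ih =>
        intro hi
        have h0 := ih (by omega)
        have h1 := hy i (by omega)
        have h2 := hy' i (by omega)
        rw [← h0] at h2
        have h3 := hdet _ _ _ _ h1 h2
        rw [List.getD_eq_getElem _ _ (by omega), List.getD_eq_getElem _ _ (by omega)] at h3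
        rw [List.take_add_one, List.take_add_one, h0, List.getElem?_eq_getElem (by omega),
          List.getElem?_eq_getElem (by omega), h3]
    have := key y.length le_rfl
    rw [List.take_length] at this
    exact List.prefix_iff_eq_take.2 this
  have hchain : ∀ x y y', (x, y) ∈ F → (x, y') ∈ F → y <+: y' ∨ y' <+: y := by
    intro x y y' hy hy'
    rcases le_total y.length y'.length with h | h
    · exact Or.inl (hwlog _ _ _ hy hy' h)
    · exact Or.inr (hwlog _ _ _ hy' hy h)
  have hsup : ∀ q : SW, ∃ s,
      IsSupRel SW.le (emb1 '' {x | ∃ p' : S, SW.le (emb1 p') q ∧ (p', x) ∈ F}) s := by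
    intro q
    refine exists_isSup _ ⟨[], [], ?_, hnil _⟩ ?_
    · cases q with
      | fin q => exact List.nil_prefix
      | inf ω => exact prefixSeq_iff.2 (by simp)
    · rintro y ⟨x, hx, hy⟩ y' ⟨x', hx', hy'⟩
      rcases comparable_of_le hx hx' with h | h
      · exact hchain x' _ _ (hFmono _ _ _ h hy) hy'
      · exact hchain x _ _ hy (hFmono _ _ _ h hy')
  choose ρ hρ using hsup
  refine ⟨ρ, ⟨F, hF, fun p => ⟨hnil p, ρ (emb1 p), hρ _⟩, hρ⟩, fun x y hxy => ?_⟩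
  exact (hρ (.fin x)).1 _ ⟨y, ⟨x, List.prefix_refl x, (hFiff x y).2 hxy⟩, rfl⟩

theorem condX_nonneg (P : Measure (Seq × Seq)) (y x : S) : 0 ≤ condX P y x :=
  div_nonneg ENNReal.toReal_nonneg ENNReal.toReal_nonneg

theorem condX_anti (P : Measure (Seq × Seq)) [IsProbabilityMeasure P] {y y' : S} (h : y <+: y')
    (x : S) : condX P y' x ≤ condX P y x :=
  div_le_div_of_nonneg_right (ENNReal.toReal_mono (measure_ne_top _ _)
    (measure_mono (cyl2_anti ⟨List.prefix_refl _, h⟩))) ENNReal.toReal_nonneg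

theorem seqTake_mono (ω : Seq) {m n : ℕ} (h : m ≤ n) : seqTake ω m <+: seqTake ω n :=
  PrefixSeq.prefix_of_le (prefixSeq_seqTake _ _) (prefixSeq_seqTake _ _) (by simpa)

/-- Under the hypotheses of part (b), from some length on the next bit of `yinf` is the strictly
more probable one: `P(y|xinf)` decreases to a positive limit along prefixes `y` of `yinf`, so more
than half of the conditional mass of a sufficiently long prefix stays on all longer ones. -/
theorem eventually_next_bit (P : Measure (Seq × Seq)) [IsProbabilityMeasure P] (h : ℕ → ℕ)
    (hmono : StrictMono h) (xinf yinf : Seq) (f : ℕ → ℚ) (hf : ∀ n, 0 < f n ∧ f n < 1)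
    (hsum : Summable fun n => (f n : ℝ))
    (hlim : ∀ y : S, PrefixSeq y yinf →
        ∃ L : ℝ, Tendsto (fun m => condX P y (seqTake xinf m)) atTop (nhds L))
    (hconv : ∀ x y : S, PrefixSeq x xinf → PrefixSeq y yinf → x.length = h y.length →
        |condX P y x / condXLim P y xinf - 1| < (f y.length : ℝ))
    (hpos : ∃ δ : ℝ, 0 < δ ∧ ∀ x y : S, PrefixSeq x xinf → PrefixSeq y yinf →
        x.length = h y.length → δ ≤ condX P y x) :
    ∃ N, ∀ n ≥ N, P (cyl2 (seqTake xinf (h (n + 1)), seqTake yinf n ++ [!yinf n])) <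
      P (cyl2 (seqTake xinf (h (n + 1)), seqTake yinf n ++ [yinf n])) := by
  obtain ⟨δ, hδ, hδr⟩ := hpos
  set r : ℕ → ℝ := fun n => condX P (seqTake yinf n) (seqTake xinf (h n)) with hr
  set L : ℕ → ℝ := fun n => condXLim P (seqTake yinf n) xinf with hLdef
  have hL : ∀ n, Tendsto (fun m => condX P (seqTake yinf n) (seqTake xinf m)) atTop
      (nhds (L n)) := fun n => tendsto_nhds_limUnder (hlim _ (prefixSeq_seqTake _ _))
  have hrδ : ∀ n, δ ≤ r n := fun n =>
    hδr _ _ (prefixSeq_seqTake _ _) (prefixSeq_seqTake _ _) (by simp)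
  have hrL : ∀ n, |r n / L n - 1| < f n := fun n => by
    have := hconv _ _ (prefixSeq_seqTake xinf (h n)) (prefixSeq_seqTake yinf n) (by simp)
    simpa using this
  have hL0 : ∀ n, L n ≠ 0 := fun n h0 => by
    -- the junk value `r / 0 = 0` would force `1 < f n`
    have h1 := hrL n
    have h2 : (f n : ℝ) < 1 := by exact_mod_cast (hf n).2
    rw [h0, div_zero, zero_sub, abs_neg, abs_one] at h1
    linarith
  have hLanti : Antitone L := fun m n hmn =>
    le_of_tendsto_of_tendsto' (hL n) (hL m) fun k => condX_anti P (seqTake_mono _ hmn) _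
  have hLnonneg : ∀ n, 0 ≤ L n := fun n => ge_of_tendsto' (hL n) fun k => condX_nonneg _ _ _
  have hLlim : Tendsto L atTop (nhds (⨅ n, L n)) :=
    tendsto_atTop_ciInf hLanti ⟨0, by rintro _ ⟨n, rfl⟩; exact hLnonneg n⟩
  set l := ⨅ n, L n
  have hratio : Tendsto (fun n => r n / L n) atTop (nhds 1) := by
    rw [tendsto_iff_dist_tendsto_zero]
    exact squeeze_zero (fun _ => dist_nonneg) (fun n => (hrL n).le) hsum.tendsto_atTop_zero
  have hrlim : Tendsto r atTop (nhds l) := by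
    have := hratio.mul hLlim
    rw [one_mul] at this
    exact this.congr fun n => div_mul_cancel₀ _ (hL0 n)
  have hl : 0 < l := hδ.trans_le (ge_of_tendsto' hrlim hrδ)
  obtain ⟨N, hN⟩ := (hLlim.eventually_lt_const (show l < 2 * l by linarith)).exists
  have hx : Tendsto (fun n => condX P (seqTake yinf N) (seqTake xinf (h n))) atTop
      (nhds (L N)) := (hL N).comp hmono.tendsto_atTop
  have hev := hx.eventually_lt (hrlim.const_mul 2) hN
  obtain ⟨N', hN'⟩ := eventually_atTop.1 hev
  refine ⟨max N N', fun n hn => ?_⟩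
  have hnN : N ≤ n := (le_max_left _ _).trans hn
  have h1 := hN' (n + 1) (((le_max_right _ _).trans hn).trans (Nat.le_succ n))
  have h2 : 0 < r (n + 1) := hδ.trans_le (hrδ _)
  simp only [hr, condX] at h1 h2
  set x := seqTake xinf (h (n + 1))
  have hden : 0 < (P (cyl x ×ˢ Set.univ)).toReal := by
    refine lt_of_le_of_ne ENNReal.toReal_nonneg fun h0 => ?_
    rw [← h0, div_zero] at h2
    exact lt_irrefl _ h2
  rw [← mul_div_assoc, div_lt_div_iff_of_pos_right hden, seqTake_succ] at h1
  have hpre : ∀ b, seqTake yinf N <+: seqTake yinf n ++ [b] := fun b =>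
    (seqTake_mono _ hnN).trans (List.prefix_append _ _)
  have h3 := add_le_of_siblings P x _ _ _ (hpre (yinf n)) (hpre (!yinf n)) (by simp) (by simp)
  rw [← ENNReal.toReal_lt_toReal (measure_ne_top _ _) (measure_ne_top _ _)]
  linarith

/-- If from length `N` on the next bit of `yinf` is strictly more probable given `xinf`, then
predicting the more probable bit is a computable monotone function recovering `yinf`. -/
theorem partB (P : Measure (Seq × Seq)) (hP : ComputableProb2 P) (h : ℕ → ℕ)
    (hmono : StrictMono h) (hcomp : Computable h) (xinf yinf : Seq) (N : ℕ)
    (hN : ∀ n ≥ N, P (cyl2 (seqTake xinf (h (n + 1)), seqTake yinf n ++ [!yinf n])) <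
      P (cyl2 (seqTake xinf (h (n + 1)), seqTake yinf n ++ [yinf n]))) :
    ∃ ρ : SW → SW, CompMono11 ρ ∧
      ∀ x y : S, PrefixSeq x xinf → PrefixSeq y yinf → x.length = h y.length →
        SW.le (.fin y) (ρ (.fin x)) := by
  have := hP.1
  obtain ⟨a, ha, haP⟩ := exists_nat_approx hP
  set y0 := seqTake yinf N
  -- the first `N` bits are hard-wired; afterwards the strictly more probable bit is predicted
  let R : S → S → Bool → Prop := fun x v b => v ++ [b] <+: y0 ∨
    (N ≤ v.length ∧ h (v.length + 1) ≤ x.length ∧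
      (P (cyl2 (x.take (h (v.length + 1)), v ++ [!b]))).toReal <
        (P (cyl2 (x.take (h (v.length + 1)), v ++ [b]))).toReal)
  let t : (S × S × Bool) × ℕ → Bool := fun z => decide (z.1.2.1 ++ [z.1.2.2] <+: y0) ||
    (decide (N ≤ z.1.2.1.length) && (decide (h (z.1.2.1.length + 1) ≤ z.1.1.length) &&
      decide (a ((z.1.1.take (h (z.1.2.1.length + 1)), z.1.2.1 ++ [!z.1.2.2]), z.2) + 4 <
        a ((z.1.1.take (h (z.1.2.1.length + 1)), z.1.2.1 ++ [z.1.2.2]), z.2))))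
  have ht : Computable t := by
    have hx : Computable fun z : (S × S × Bool) × ℕ => z.1.1 := Computable.fst.comp Computable.fst
    have hvb : Computable fun z : (S × S × Bool) × ℕ => z.1.2 := Computable.snd.comp Computable.fst
    have hv : Computable fun z : (S × S × Bool) × ℕ => z.1.2.1 := Computable.fst.comp hvb
    have hb : Computable fun z : (S × S × Bool) × ℕ => z.1.2.2 := Computable.snd.comp hvb
    have hu := Computable.list_concat.comp hv hb
    have hu' := Computable.list_concat.comp hv (Primrec.not.to_comp.comp hb)
    have hh : Computable fun z : (S × S × Bool) × ℕ => h (z.1.2.1.length + 1) :=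
      hcomp.comp (Computable.succ.comp (Computable.list_length.comp hv))
    have hxt := Primrec.list_take.to_comp.comp hh hx
    have hle : Computable₂ fun m n : ℕ => decide (m ≤ n) := Primrec.nat_le.decide.to_comp
    have hlt : Computable₂ fun m n : ℕ => decide (m < n) := Primrec.nat_lt.decide.to_comp
    refine Primrec.or.to_comp.comp (computable_decide_isPrefix_of hu (Computable.const y0))
      (Primrec.and.to_comp.comp
        (hle.comp (Computable.const N) (Computable.list_length.comp hv))
        (Primrec.and.to_comp.comp (hle.comp hh (Computable.list_length.comp hx)) ?_))
    exact hlt.comp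
      (Primrec.nat_add.to_comp.comp
        (ha.comp (Computable.pair (Computable.pair hxt hu') Computable.snd)) (Computable.const 4))
      (ha.comp (Computable.pair (Computable.pair hxt hu) Computable.snd))
  suffices hρ : ∃ ρ : SW → SW, CompMono11 ρ ∧
      ∀ x y : S, (∀ i < y.length, R x (y.take i) (y.getD i false)) →
        SW.le (.fin y) (ρ (.fin x)) by
    obtain ⟨ρ, hρ, hρ'⟩ := hρ
    refine ⟨ρ, hρ, fun x y hx hy hxy => hρ' x y fun i hi => ?_⟩
    have hyi : y.take i = seqTake yinf i := by
      rw [prefixSeq_eq hy, take_seqTake _ hi.le]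
    have hbi : y.getD i false = yinf i := by
      rw [List.getD_eq_getElem _ _ hi, prefixSeq_iff.1 hy]
    rw [hyi, hbi]
    rcases lt_or_ge i N with hiN | hiN
    · refine Or.inl ?_
      rw [← seqTake_succ]
      exact seqTake_mono _ hiN
    · have hle : h (i + 1) ≤ x.length := by
        rw [hxy]
        exact hmono.monotone hi
      refine Or.inr ⟨by simpa using hiN, by simpa using hle, ?_⟩
      rw [length_seqTake, prefixSeq_eq hx, take_seqTake _ hle,
        ENNReal.toReal_lt_toReal (measure_ne_top _ _) (measure_ne_top _ _)]
      exact hN i hiN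
  refine exists_compMono_of_rule R t ht ?_ ?_ ?_ ?_
  · intro x v b k hk
    simp only [t, Bool.or_eq_true, Bool.and_eq_true, decide_eq_true_iff] at hk
    refine hk.imp id fun ⟨h1, h2, h3⟩ => ⟨h1, h2, ?_⟩
    have e1 := (haP (x.take (h (v.length + 1)), v ++ [!b]) k).2
    have e2 := (haP (x.take (h (v.length + 1)), v ++ [b]) k).1
    have h3' : ((a ((x.take (h (v.length + 1)), v ++ [!b]), k) : ℕ) : ℝ) + 4 <
        a ((x.take (h (v.length + 1)), v ++ [b]), k) := by exact_mod_cast h3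
    exact lt_of_mul_lt_mul_left (by linarith) (Nat.cast_nonneg k)
  · intro x v b hR
    simp only [t, Bool.or_eq_true, Bool.and_eq_true, decide_eq_true_iff]
    rcases hR with hR | ⟨h1, h2, h3⟩
    · exact Eventually.of_forall fun k => Or.inl hR
    · -- once `k` times the gap exceeds the total error `8`, the comparison succeeds
      have hlim := tendsto_natCast_atTop_atTop (R := ℝ) |>.atTop_mul_const (sub_pos.2 h3)
      filter_upwards [hlim.eventually_gt_atTop 8] with k hk
      refine Or.inr ⟨h1, h2, ?_⟩
      have e1 := (haP (x.take (h (v.length + 1)), v ++ [!b]) k).1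
      have e2 := (haP (x.take (h (v.length + 1)), v ++ [b]) k).2
      have : ((a ((x.take (h (v.length + 1)), v ++ [!b]), k) : ℕ) : ℝ) + 4 <
        a ((x.take (h (v.length + 1)), v ++ [b]), k) := by linarith
      exact_mod_cast this
  · intro x x' v b hx hR
    refine hR.imp id fun ⟨h1, h2, h3⟩ => ⟨h1, h2.trans hx.length_le, ?_⟩
    have : x'.take (h (v.length + 1)) = x.take (h (v.length + 1)) := by
      obtain ⟨w, rfl⟩ := hx
      exact List.take_append_of_le_length h2
    rwa [this]
  · have hlen : ∀ v b, v ++ [b] <+: y0 → v.length < N := fun v b hv => by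
      have := hv.length_le
      simp [y0] at this
      omega
    rintro x v b b' (hb | ⟨hb1, -, hb⟩) (hb' | ⟨hb1', -, hb'⟩)
    · have hp := List.prefix_of_prefix_length_le hb hb' (by simp)
      simpa using hp.eq_of_length (by simp)
    · exact absurd (hlen _ _ hb) (not_lt.2 hb1')
    · exact absurd (hlen _ _ hb') (not_lt.2 hb1)
    · by_contra hne
      have : b' = !b := by cases b <;> cases b' <;> simp_all
      subst this
      rw [Bool.not_not] at hb'
      exact lt_asymm hb hb'

/-! ### The test refuting estimability -/

/-- Suppose `W` is the graph of a partial monotone map `x ↦ y` and `P(x,y) ≤ c * P_X(x)` on `W`.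
Then `W` covers mass at most `c`: the elements of `W` with `x` minimal already cover everything,
and their `x`-cylinders are disjoint. -/
theorem measure_cover_le (P : Measure (Seq × Seq)) [IsProbabilityMeasure P] (W : Set (S × S))
    (c : ℝ≥0∞) (hW : ∀ a ∈ W, P (cyl2 a) ≤ c * P (cyl2 (a.1, [])))
    (hch : ∀ a ∈ W, ∀ b ∈ W, a.1 <+: b.1 → a.2 <+: b.2)
    (hinj : ∀ a ∈ W, ∀ b ∈ W, a.1 = b.1 → a = b) :
    P (⋃ a ∈ W, cyl2 a) ≤ c := by
  set M : Set (S × S) := {a ∈ W | ∀ b ∈ W, b.1 <+: a.1 → b.1 = a.1}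
  have hM : ∀ n, ∀ a ∈ W, a.1.length = n → ∃ b ∈ M, Pre2 b a := by
    intro n
    induction n using Nat.strong_induction_on with
    | _ n ih =>
      intro a ha hn
      by_cases hm : a ∈ M
      · exact ⟨a, hm, List.prefix_rfl, List.prefix_rfl⟩
      · obtain ⟨b, hb, hba, hne⟩ : ∃ b ∈ W, b.1 <+: a.1 ∧ b.1 ≠ a.1 := by
          by_contra! hcon
          exact hm ⟨ha, hcon⟩
        have hlt : b.1.length < n := by
          rw [← hn]
          exact lt_of_le_of_ne hba.length_le fun h => hne (hba.eq_of_length h)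
        obtain ⟨d, hd, hdb⟩ := ih _ hlt b hb rfl
        exact ⟨d, hd, hdb.1.trans hba, hdb.2.trans (hch _ hb _ ha hba)⟩
  have hdisj : M.PairwiseDisjoint fun a => cyl2 (a.1, []) := by
    intro a ha b hb hab
    refine Set.disjoint_prod.2 (Or.inl ?_)
    by_contra hcon
    rcases cyl_comparable hcon with h | h
    · exact hab (hinj _ ha.1 _ hb.1 (hb.2 _ ha.1 h))
    · exact hab (hinj _ ha.1 _ hb.1 (ha.2 _ hb.1 h).symm)
  calc P (⋃ a ∈ W, cyl2 a) ≤ P (⋃ a ∈ M, cyl2 a) := by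
        refine measure_mono (Set.iUnion₂_subset fun a ha => ?_)
        obtain ⟨b, hb, hba⟩ := hM _ a ha rfl
        exact (cyl2_anti hba).trans (Set.subset_biUnion_of_mem (u := cyl2) hb)
    _ ≤ ∑' a : M, P (cyl2 a) := measure_biUnion_le P M.to_countable _
    _ ≤ ∑' a : M, c * P (cyl2 (a.1.1, [])) := ENNReal.tsum_le_tsum fun a => hW _ a.2.1
    _ = c * P (⋃ a ∈ M, cyl2 (a.1, [])) := by
        rw [ENNReal.tsum_mul_left,
          measure_biUnion M.to_countable hdisj fun a _ => measurableSet_cyl2 _]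
    _ ≤ c := by
        calc _ ≤ c * 1 := by gcongr; exact prob_le_one
          _ = c := mul_one c

/-- A random pair lies in no null cylinder. -/
theorem Random2.pos {P : Measure (Seq × Seq)} {ω : Seq × Seq} (hR : Random2 P ω) {a : S × S}
    (ha : Pre2Seq a ω) : P (cyl2 a) ≠ 0 := by
  intro h0
  have hU : ∀ n, testUnion cyl2 {b : ℕ × (S × S) | b.2 = a} n = cyl2 a := fun n => by
    simp [testUnion]
  refine hR {b | b.2 = a} ⟨⟨fun n => some (n, a), ?_, ?_⟩, fun n => ?_, fun n => ?_⟩ ?_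
  · exact Computable.option_some.comp (Computable.pair Computable.id (Computable.const a))
  · ext ⟨n, b⟩
    simp [eq_comm]
  · rw [hU, hU]
  · rw [hU, h0]
    exact ENNReal.pow_pos (by simp) n
  · simp only [hU, Set.mem_iInter]
    exact fun _ => ha

/-- The pairs `(x, y)` with `|x| = h |y|`, with `y` below the value at `x` of the monotone function
generated by `F`, and with `P(x,y) * 2^(m+1) < P_X(x)`, i.e. `P_X(x) > 0` and
`P(y|x) < 2^{-(m+1)}`. -/
def lowSet (P : Measure (Seq × Seq)) (h : ℕ → ℕ) (F : Set (S × S)) (m : ℕ) : Set (S × S) :=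
  {a | a.1.length = h a.2.length ∧ (∃ b ∈ F, b.1 <+: a.1 ∧ a.2 <+: b.2) ∧
    (P (cyl2 a)).toReal * 2 ^ (m + 1) < (P (cyl2 (a.1, []))).toReal}

/-- The conditions defining `lowSet` are semidecidable, uniformly in `m`: the strict inequality is
verified by sufficiently precise approximations of `P`. -/
theorem reSet_lowSet {P : Measure (Seq × Seq)} (hP : ComputableProb2 P) {h : ℕ → ℕ}
    (hcomp : Computable h) {F : Set (S × S)} (hF : RESet F) :
    RESet {b : ℕ × (S × S) | b.2 ∈ lowSet P h F b.1} := by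
  obtain ⟨a, ha, haP⟩ := exists_nat_approx hP
  obtain ⟨g, hg, rfl⟩ := hF
  let T : (ℕ × (S × S)) × (ℕ × (S × S) × ℕ) → Bool := fun z =>
    decide (z.1.2.1.length = h z.1.2.2.length) &&
      ((decide (g z.2.1 = some z.2.2.1) &&
        (decide (z.2.2.1.1 <+: z.1.2.1) && decide (z.1.2.2 <+: z.2.2.1.2))) &&
      decide ((a (z.1.2, z.2.2.2) + 2) * 2 ^ (z.1.1 + 1) + 2 < a ((z.1.2.1, []), z.2.2.2)))
  have hT : Computable T := by
    have hxy : Computable fun z : (ℕ × (S × S)) × (ℕ × (S × S) × ℕ) => z.1.2 :=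
      Computable.snd.comp Computable.fst
    have hx : Computable fun z : (ℕ × (S × S)) × (ℕ × (S × S) × ℕ) => z.1.2.1 :=
      Computable.fst.comp hxy
    have hy : Computable fun z : (ℕ × (S × S)) × (ℕ × (S × S) × ℕ) => z.1.2.2 :=
      Computable.snd.comp hxy
    have hr : Computable fun z : (ℕ × (S × S)) × (ℕ × (S × S) × ℕ) => z.2.2 :=
      Computable.snd.comp Computable.snd
    have hb : Computable fun z : (ℕ × (S × S)) × (ℕ × (S × S) × ℕ) => z.2.2.1 :=
      Computable.fst.comp hr
    have hk : Computable fun z : (ℕ × (S × S)) × (ℕ × (S × S) × ℕ) => z.2.2.2 :=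
      Computable.snd.comp hr
    have hpow : Computable fun z : (ℕ × (S × S)) × (ℕ × (S × S) × ℕ) => 2 ^ (z.1.1 + 1) := by
      have h2 : Primrec fun n : ℕ => 2 ^ n :=
        (Primrec.nat_rec₁ 1 (f := fun _ r => r * 2)
          (Primrec.nat_mul.comp Primrec.snd (Primrec.const 2))).of_eq fun n => by
            induction n with
            | zero => rfl
            | succ n ih => simp only [ih, pow_succ]
      exact h2.to_comp.comp (Computable.succ.comp (Computable.fst.comp Computable.fst))
    have hadd : Computable₂ fun m n : ℕ => m + n := Primrec.nat_add.to_comp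
    have hmul : Computable₂ fun m n : ℕ => m * n := Primrec.nat_mul.to_comp
    have heq : Computable₂ fun m n : ℕ => decide (m = n) := Primrec.eq.decide.to_comp
    have heqo : Computable₂ fun m n : Option (S × S) => decide (m = n) :=
      Primrec.eq.decide.to_comp
    have hlt : Computable₂ fun m n : ℕ => decide (m < n) := Primrec.nat_lt.decide.to_comp
    refine Primrec.and.to_comp.comp
      (heq.comp (Computable.list_length.comp hx) (hcomp.comp (Computable.list_length.comp hy)))
      (Primrec.and.to_comp.comp (Primrec.and.to_comp.comp
        (heqo.comp (hg.comp (Computable.fst.comp Computable.snd)) (Computable.option_some.comp hb))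
        (Primrec.and.to_comp.comp (computable_decide_isPrefix_of (Computable.fst.comp hb) hx)
          (computable_decide_isPrefix_of hy (Computable.snd.comp hb)))) ?_)
    exact hlt.comp
      (hadd.comp (hmul.comp (hadd.comp (ha.comp (Computable.pair hxy hk)) (Computable.const 2))
        hpow) (Computable.const 2))
      (ha.comp (Computable.pair (Computable.pair hx (Computable.const [])) hk))
  convert reSet_of_exists T hT using 1
  ext ⟨m, x, y⟩
  simp only [lowSet, T, Set.mem_ofPred_eq, Bool.and_eq_true, decide_eq_true_iff]
  have hpw : (0 : ℝ) < 2 ^ (m + 1) := by positivity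
  constructor
  · rintro ⟨h1, ⟨b, ⟨j, hj⟩, h2, h3⟩, h4⟩
    -- once `k` times the gap exceeds the total approximation error, the comparison succeeds
    have hlim := tendsto_natCast_atTop_atTop (R := ℝ) |>.atTop_mul_const (sub_pos.2 h4)
    obtain ⟨k, hk⟩ := (hlim.eventually_gt_atTop ((4 : ℝ) * 2 ^ (m + 1) + 4)).exists
    refine ⟨(j, b, k), h1, ⟨hj, h2, h3⟩, ?_⟩
    have e1 := mul_le_mul_of_nonneg_right (haP (x, y) k).1 hpw.le
    have e2 := (haP (x, []) k).2
    have : ((a ((x, y), k) : ℝ) + 2) * 2 ^ (m + 1) + 2 < a ((x, []), k) := by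
      nlinarith
    exact_mod_cast this
  · rintro ⟨⟨j, b, k⟩, h1, ⟨hj, h2, h3⟩, h4⟩
    refine ⟨h1, ⟨b, ⟨j, hj⟩, h2, h3⟩, ?_⟩
    have e1 := mul_le_mul_of_nonneg_right (haP (x, y) k).2 hpw.le
    have e2 := (haP (x, []) k).1
    have h4' : ((a ((x, y), k) : ℝ) + 2) * 2 ^ (m + 1) + 2 < a ((x, []), k) := by
      exact_mod_cast h4
    refine lt_of_mul_lt_mul_left (a := (k : ℝ)) ?_ (Nat.cast_nonneg k)
    nlinarith

/-- A random point cannot carry arbitrarily small `P(y|x)` along the graph of a computable monotone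
function: the sets `lowSet` form a test. -/
theorem partC (P : Measure (Seq × Seq)) (hP : ComputableProb2 P) (h : ℕ → ℕ)
    (hmono : StrictMono h) (hcomp : Computable h) (xinf yinf : Seq)
    (hR : Random2 P (xinf, yinf))
    (hinf : ∀ δ : ℝ, 0 < δ → ∃ x y : S, PrefixSeq x xinf ∧ PrefixSeq y yinf ∧
      x.length = h y.length ∧ condX P y x < δ) :
    ¬ ∃ ρ : SW → SW, CompMono11 ρ ∧
      ∀ x y : S, PrefixSeq x xinf → PrefixSeq y yinf → x.length = h y.length →
        SW.le (SW.fin y) (ρ (SW.fin x)) := by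
  rintro ⟨ρ, ⟨F, hF, hF1, hF2⟩, hρ⟩
  have := hP.1
  have hchain : ∀ m, ∀ a ∈ lowSet P h F m, ∀ b ∈ lowSet P h F m, a.1 <+: b.1 →
      a.2 <+: b.2 := by
    rintro m a ⟨ha1, ⟨a', ha', ha2, ha3⟩, -⟩ b ⟨hb1, ⟨b', hb', hb2, hb3⟩, -⟩ hab
    have hsup := hF2 (.fin b.1)
    have e1 : SW.le (.fin a'.2) (ρ (.fin b.1)) := hsup.1 _ ⟨a'.2, ⟨a'.1, ha2.trans hab, ha'⟩, rfl⟩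
    have e2 : SW.le (.fin b'.2) (ρ (.fin b.1)) := hsup.1 _ ⟨b'.2, ⟨b'.1, hb2, hb'⟩, rfl⟩
    -- `|a.2| ≤ |b.2|` because `h` is strictly increasing
    have hle : a.2.length ≤ b.2.length := by
      rw [← hmono.le_iff_le, ← ha1, ← hb1]
      exact hab.length_le
    rcases comparable_of_le e1 e2 with hc | hc
    · exact List.prefix_of_prefix_length_le (ha3.trans hc) hb3 hle
    · exact List.prefix_of_prefix_length_le ha3 (hb3.trans hc) hle
  have hinj : ∀ m, ∀ a ∈ lowSet P h F m, ∀ b ∈ lowSet P h F m, a.1 = b.1 → a = b := by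
    intro m a ha b hb hab
    have hlen : a.2.length = b.2.length := hmono.injective (by rw [← ha.1, ← hb.1, hab])
    exact Prod.ext hab ((hchain m a ha b hb (hab ▸ List.prefix_rfl)).eq_of_length hlen)
  have hmass : ∀ m, P (⋃ a ∈ lowSet P h F m, cyl2 a) ≤ (2⁻¹ : ℝ≥0∞) ^ (m + 1) := by
    intro m
    refine measure_cover_le P _ _ (fun a ha => ?_) (hchain m) (hinj m)
    have h3 := ha.2.2.le
    rw [← ENNReal.toReal_le_toReal (measure_ne_top _ _)
      (ENNReal.mul_ne_top (by simp) (measure_ne_top _ _)), ENNReal.toReal_mul]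
    simp only [ENNReal.toReal_pow, ENNReal.toReal_inv, ENNReal.toReal_ofNat]
    rwa [inv_pow, inv_mul_eq_div, le_div_iff₀ (by positivity)]
  refine hR _ ⟨reSet_lowSet hP hcomp hF, fun m => ?_, fun m => ?_⟩ ?_
  · refine Set.biUnion_subset_biUnion_left ?_
    rintro a ⟨h1, h2, h3⟩
    refine ⟨h1, h2, lt_of_le_of_lt ?_ h3⟩
    gcongr
    · norm_num
    · omega
  · refine (hmass m).trans_lt ?_
    rw [pow_succ]
    calc (2⁻¹ : ℝ≥0∞) ^ m * 2⁻¹ < (2⁻¹ : ℝ≥0∞) ^ m * 1 :=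
          ENNReal.mul_lt_mul_right (by simp) (by simp) (by simp)
      _ = _ := mul_one _
  · rw [Set.mem_iInter]
    intro m
    obtain ⟨x, y, hx, hy, hxy, hlt⟩ := hinf (1 / 2 ^ (m + 1)) (by positivity)
    refine Set.mem_biUnion (x := (x, y)) ?_ ⟨hx, hy⟩
    obtain ⟨z, ⟨p', hp', hz⟩, hyz⟩ := exists_prefix_of_le_isSup
      {z | ∃ p' : S, SW.le (emb1 p') (.fin x) ∧ (p', z) ∈ F}
      ⟨[], ⟨[], List.nil_prefix, (hF1 []).1⟩⟩ (hF2 (.fin x)) (hρ x y hx hy hxy)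
    refine ⟨hxy, ⟨(p', z), hz, hp', hyz⟩, ?_⟩
    have hpos : 0 < (P (cyl2 (x, []))).toReal :=
      ENNReal.toReal_pos (hR.pos ⟨hx, fun i => i.elim0⟩) (measure_ne_top _ _)
    rw [condX, ← cyl2_nil, div_lt_div_iff₀ hpos (by positivity), one_mul] at hlt
    exact hlt

/-! ### Estimation from samples -/

/-- Theorem 8 b,c: with A := {(x,y) : |x| = h(|y|)}:
(b) if P(y|x) effectively converges to P(y|xinf) with summable error f along A(xinf,yinf)
and inf_{(x,y)∈A(xinf,yinf)} P(y|x) > 0, then some computable monotone ρ : S∪Ω → S∪Ω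
satisfies y ⊑ ρ(x) on A(xinf,yinf);
(c) if (xinf,yinf) ∈ R^P and inf_{(x,y)∈A(xinf,yinf)} P(y|x) = 0, then no computable
monotone ρ satisfies y ⊑ ρ(x) on A(xinf,yinf). -/
theorem estimation_bc (P : Measure (Seq × Seq)) (hP : ComputableProb2 P)
    (h : ℕ → ℕ) (hmono : StrictMono h) (hcomp : Computable h)
    (xinf yinf : Seq) :
    ((∀ f : ℕ → ℚ, (∀ n, 0 < f n ∧ f n < 1) → (Summable fun n => (f n : ℝ)) →
      (∀ y : S, PrefixSeq y yinf →
        ∃ L : ℝ, Tendsto (fun m => condX P y (seqTake xinf m)) atTop (nhds L)) →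
      (∀ x y : S, PrefixSeq x xinf → PrefixSeq y yinf → x.length = h y.length →
        |condX P y x / condXLim P y xinf - 1| < (f y.length : ℝ)) →
      (∃ δ : ℝ, 0 < δ ∧ ∀ x y : S, PrefixSeq x xinf → PrefixSeq y yinf →
        x.length = h y.length → δ ≤ condX P y x) →
      ∃ ρ : SW → SW, CompMono11 ρ ∧
        ∀ x y : S, PrefixSeq x xinf → PrefixSeq y yinf → x.length = h y.length →
          SW.le (SW.fin y) (ρ (SW.fin x))) ∧
    (Random2 P (xinf, yinf) →
      (∀ δ : ℝ, 0 < δ → ∃ x y : S, PrefixSeq x xinf ∧ PrefixSeq y yinf ∧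
        x.length = h y.length ∧ condX P y x < δ) →
      ¬ ∃ ρ : SW → SW, CompMono11 ρ ∧
        ∀ x y : S, PrefixSeq x xinf → PrefixSeq y yinf → x.length = h y.length →
          SW.le (SW.fin y) (ρ (SW.fin x)))) := by
  refine ⟨fun f hf hsum hlim hconv hpos => ?_, partC P hP h hmono hcomp xinf yinf⟩
  have := hP.1
  obtain ⟨N, hN⟩ := eventually_next_bit P h hmono xinf yinf f hf hsum hlim hconv hpos
  exact partB P hP h hmono hcomp xinf yinf N hN

end AlgRand
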